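/- There exists an absolute constant C such that: for every connected finite undirected unweighted simple graph G on n vertices and every subset S of its vertices, there exists a consistent collection Π of paths in G containing, for each pair s, t ∈ S, a shortest path π_{s,t} from s to t, such that the total number of distinct edges appearing in the paths of Π is at most C · (n + √n · |S|²). -/

import Mathlib

/-- A walk `w` is a (contiguous) subwalk of a walk `p` if `p` is obtained by
prepending and appending walks to `w`. -/
def IsSubwalk {V : Type} {G : SimpleGraph V} {x y a b : V}
    (w : G.Walk x y) (p : G.Walk a b) : Prop :=
  ∃ (p₁ : G.Walk a x) (p₂ : G.Walk y b), p = p₁.append (w.append p₂)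

/-- Two paths are consistent if their intersection is either empty or a
contiguous subpath of both (possibly traversed in reverse in the second). -/
def ConsistentPair {V : Type} {G : SimpleGraph V} {a b a' b' : V}
    (p : G.Walk a b) (q : G.Walk a' b') : Prop :=
  (∀ v : V, v ∈ p.support → v ∉ q.support) ∨
  ∃ (x y : V) (w : G.Walk x y),
    IsSubwalk w p ∧ (IsSubwalk w q ∨ IsSubwalk w.reverse q) ∧
    ∀ v : V, (v ∈ p.support ∧ v ∈ q.support) ↔ v ∈ w.support

/-!
Give the edges weights whose subset sums are all distinct and let `π s t` be the lightest among the
shortest walks from `s` to `t`. It is unique, and the property passes to subwalks and reversals, so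
two such paths that visit two common vertices agree between them. This gives consistency.

For the edge count, let `D x` be the degree of `x` in the union of `k` pairwise consistent paths.
Pairs of edges meeting at `x` are counted by `∑ x, D x ^ 2`. When a path `q` is added, a pair of new
edges lies on `q`, which has degree at most two, while a pair formed by a new edge and an edge of an
older path `p` sits at one of the at most two places where `q` leaves `p`. Hence
`∑ x, D x ^ 2 ≤ 2 * ∑ x, D x + 4 * k ^ 2`, and Cauchy–Schwarz turns this into a bound on `∑ x, D x`.
-/

open Finset SimpleGraph

section Subwalks

variable {V : Type*} {G : SimpleGraph V} {u v u' v' x y : V}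

lemma isSubwalk_reverse_iff {w : G.Walk x y} {p : G.Walk u v} :
    w.reverse.IsSubwalk p.reverse ↔ w.IsSubwalk p := by
  simp only [Walk.isSubwalk_iff_support_isInfix, Walk.support_reverse, List.reverse_infix]

lemma isSubwalk_or_isSubwalk_of_mem_support (p : G.Walk u v) (hx : x ∈ p.support)
    (hy : y ∈ p.support) :
    (∃ w : G.Walk x y, w.IsSubwalk p) ∨ ∃ w : G.Walk y x, w.IsSubwalk p := by
  classical
  rw [← p.take_spec hx, Walk.mem_support_append_iff] at hy
  rcases hy with hy | hy
  · exact .inr ⟨_, ((p.takeUntil x hx).isSubwalk_dropUntil hy).trans (p.isSubwalk_takeUntil hx)⟩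
  · exact .inl ⟨_, ((p.dropUntil x hx).isSubwalk_takeUntil hy).trans (p.isSubwalk_dropUntil hx)⟩

lemma exists_isSubwalk_from_first_mem (s : Finset V) (p : G.Walk u v)
    (h : ∃ z ∈ s, z ∈ p.support) :
    ∃ x ∈ s, ∃ w : G.Walk x v, w.IsSubwalk p ∧ ∀ z ∈ s, z ∈ p.support → z ∈ w.support := by
  classical
  obtain ⟨x, hxs, hx, hfirst⟩ :=
    p.exists_mem_support_forall_mem_support_imp_eq s (by simpa [Finset.Nonempty] using h)
  refine ⟨x, hxs, p.dropUntil x hx, p.isSubwalk_dropUntil hx, fun z hzs hz ↦ ?_⟩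
  rw [← p.take_spec hx, Walk.mem_support_append_iff] at hz
  rcases hz with hz | hz
  · rw [hfirst z hzs hz]
    exact Walk.start_mem_support _
  · exact hz

lemma exists_isSubwalk_between_extreme_mem (s : Finset V) (p : G.Walk u v)
    (h : ∃ z ∈ s, z ∈ p.support) :
    ∃ x ∈ s, ∃ y ∈ s, ∃ w : G.Walk x y,
      w.IsSubwalk p ∧ ∀ z ∈ s, z ∈ p.support → z ∈ w.support := by
  obtain ⟨x, hx, w₁, hw₁, hmem₁⟩ := exists_isSubwalk_from_first_mem s p h
  obtain ⟨y, hy, w₂, hw₂, hmem₂⟩ := exists_isSubwalk_from_first_mem s w₁.reverse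
    ⟨x, hx, Walk.end_mem_support _⟩
  refine ⟨x, hx, y, hy, w₂.reverse, ?_, fun z hzs hz ↦ ?_⟩
  · exact (isSubwalk_reverse_iff.1 (by rwa [Walk.reverse_reverse])).trans hw₁
  · simpa using hmem₂ z hzs (by simpa using hmem₁ z hzs hz)

lemma eq_of_isPath_of_edges_subset {p q : G.Walk u v} (hp : p.IsPath) (hq : q.IsPath)
    (h : p.edges ⊆ q.edges) : p = q := by
  induction p with
  | nil => exact (Walk.isPath_iff_nil.1 hq).eq_nil.symm
  | @cons u w v huw p ih =>
    rw [Walk.cons_isPath_iff] at hp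
    cases q with
    | nil => exact absurd p.end_mem_support hp.2
    | cons huw' q =>
      have hsnd := hq.eq_snd_of_mem_edges (w := w) (h List.mem_cons_self)
      rw [Walk.snd_cons] at hsnd
      subst hsnd
      rw [Walk.cons_isPath_iff] at hq
      refine congrArg _ (ih hp.1 hq.1 fun e he ↦ ?_)
      have he' := h (List.mem_cons_of_mem _ he)
      rw [Walk.edges_cons, List.mem_cons] at he'
      refine he'.resolve_left ?_
      rintro rfl
      exact hp.2 (p.fst_mem_support_of_mem_edges he)

end Subwalks

section LightestGeodesics

lemma exists_injective_sum_nat (α : Type*) [Countable α] :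
    ∃ f : α → ℕ, Function.Injective fun s : Finset α ↦ ∑ a ∈ s, f a := by
  obtain ⟨g, hg⟩ := Countable.exists_injective_nat α
  refine ⟨fun a ↦ 2 ^ g a, fun s t hst ↦ Finset.map_injective ⟨g, hg⟩ ?_⟩
  exact Finset.geomSum_injective le_rfl (by simpa only [Finset.sum_map] using! hst)

variable {V : Type*} {G : SimpleGraph V} {f : Sym2 V → ℕ} {u v u' v' x : V}

/-- The total weight of the edges of a walk, each edge counted as often as it is traversed. -/
def edgeWeight (f : Sym2 V → ℕ) (p : G.Walk u v) : ℕ :=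
  (p.edges.map f).sum

/-- A shortest walk whose edge weight is least among the shortest walks with the same endpoints.
The weight serves to break ties between shortest walks. -/
structure IsLightestGeodesic (f : Sym2 V → ℕ) (p : G.Walk u v) : Prop where
  length_eq : p.length = G.dist u v
  weight_le : ∀ q : G.Walk u v, q.length = G.dist u v → edgeWeight f p ≤ edgeWeight f q

lemma edgeWeight_append (p : G.Walk u v) (q : G.Walk v x) :
    edgeWeight f (p.append q) = edgeWeight f p + edgeWeight f q := by
  simp only [edgeWeight, Walk.edges_append, List.map_append, List.sum_append]

lemma edgeWeight_reverse (p : G.Walk u v) : edgeWeight f p.reverse = edgeWeight f p := by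
  simp only [edgeWeight, Walk.edges_reverse, List.map_reverse, List.sum_reverse]

lemma edgeWeight_eq_sum [DecidableEq V] {p : G.Walk u v} (hp : p.IsTrail) :
    edgeWeight f p = ∑ e ∈ p.edges.toFinset, f e :=
  (List.sum_toFinset f hp.edges_nodup).symm

lemma exists_isLightestGeodesic (f : Sym2 V → ℕ) (h : G.Reachable u v) :
    ∃ p : G.Walk u v, IsLightestGeodesic f p := by
  obtain ⟨p, hp⟩ := exists_minimalFor_of_wellFoundedLT
    (fun p : G.Walk u v ↦ p.length = G.dist u v) (edgeWeight f) h.exists_walk_length_eq_dist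
  exact ⟨p, hp.1, fun q hq ↦ (le_total _ _).elim id (hp.2 hq)⟩

namespace IsLightestGeodesic

lemma isPath {p : G.Walk u v} (h : IsLightestGeodesic f p) : p.IsPath :=
  p.isPath_of_length_eq_dist h.length_eq

lemma reverse {p : G.Walk u v} (h : IsLightestGeodesic f p) : IsLightestGeodesic f p.reverse where
  length_eq := by rw [Walk.length_reverse, h.length_eq, dist_comm]
  weight_le q hq := by
    rw [edgeWeight_reverse, ← edgeWeight_reverse q]
    exact h.weight_le _ (by rw [Walk.length_reverse, hq, dist_comm])

lemma of_isSubwalk {p : G.Walk u v} {w : G.Walk u' v'} (h : IsLightestGeodesic f p)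
    (hw : w.IsSubwalk p) : IsLightestGeodesic f w := by
  have hlen := length_eq_dist_of_subwalk h.length_eq hw
  obtain ⟨a, b, rfl⟩ := hw
  refine ⟨hlen, fun r hr ↦ ?_⟩
  have hle := h.weight_le ((a.append r).append b)
    (by rw [← h.length_eq]; simp only [Walk.length_append, hlen, hr])
  simpa only [edgeWeight_append, add_le_add_iff_left, add_le_add_iff_right] using hle

lemma eq (hf : Function.Injective fun s : Finset (Sym2 V) ↦ ∑ e ∈ s, f e) {p q : G.Walk u v}
    (hp : IsLightestGeodesic f p) (hq : IsLightestGeodesic f q) : p = q := by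
  classical
  have hweight := (hp.weight_le q hq.length_eq).antisymm (hq.weight_le p hp.length_eq)
  rw [edgeWeight_eq_sum hp.isPath.isTrail, edgeWeight_eq_sum hq.isPath.isTrail] at hweight
  have hedges : p.edges.toFinset = q.edges.toFinset := hf hweight
  refine eq_of_isPath_of_edges_subset hp.isPath hq.isPath fun e he ↦ ?_
  rwa [← List.mem_toFinset, ← hedges, List.mem_toFinset]

end IsLightestGeodesic

end LightestGeodesics

section Consistency

variable {V : Type} {G : SimpleGraph V} {u v u' v' x y : V}

lemma isSubwalk_iff {w : G.Walk x y} {p : G.Walk u v} : IsSubwalk w p ↔ w.IsSubwalk p := by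
  simp only [IsSubwalk, Walk.IsSubwalk, Walk.append_assoc]

theorem IsLightestGeodesic.consistentPair {f : Sym2 V → ℕ}
    (hf : Function.Injective fun s : Finset (Sym2 V) ↦ ∑ e ∈ s, f e)
    {p : G.Walk u v} {q : G.Walk u' v'}
    (hp : IsLightestGeodesic f p) (hq : IsLightestGeodesic f q) : ConsistentPair p q := by
  classical
  refine or_iff_not_imp_left.2 fun hmeet ↦ ?_
  push Not at hmeet
  obtain ⟨x, hx, y, hy, w, hwp, hmem⟩ := exists_isSubwalk_between_extreme_mem
    q.support.toFinset p (by simpa [and_comm] using hmeet)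
  simp only [List.mem_toFinset] at hx hy hmem
  have hw := hp.of_isSubwalk hwp
  have hwq : w.IsSubwalk q ∨ w.reverse.IsSubwalk q := by
    refine (isSubwalk_or_isSubwalk_of_mem_support q hx hy).imp ?_ ?_ <;> rintro ⟨r, hr⟩
    · rwa [hw.eq hf (hq.of_isSubwalk hr)]
    · rwa [hw.reverse.eq hf (hq.of_isSubwalk hr)]
  have hsupp : w.support ⊆ q.support := by
    rcases hwq with h | h
    · exact h.support_subset
    · simpa using h.support_subset
  exact ⟨x, y, w, isSubwalk_iff.2 hwp, hwq.imp isSubwalk_iff.2 isSubwalk_iff.2,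
    fun z ↦ ⟨fun hz ↦ hmem z hz.2 hz.1, fun hz ↦ ⟨hwp.support_subset hz, hsupp hz⟩⟩⟩

end Consistency

section EdgeDegree

variable {V ι : Type*} [DecidableEq V]

/-- The number of edges of `E` incident to `x`. A loop counts once. -/
def edgeDegree (E : Finset (Sym2 V)) (x : V) : ℕ :=
  #{e ∈ E | x ∈ e}

@[gcongr]
lemma edgeDegree_mono {E F : Finset (Sym2 V)} (h : E ⊆ F) (x : V) :
    edgeDegree E x ≤ edgeDegree F x :=
  card_le_card (filter_subset_filter _ h)

lemma edgeDegree_union_of_disjoint {E F : Finset (Sym2 V)} (h : Disjoint E F) (x : V) :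
    edgeDegree (E ∪ F) x = edgeDegree E x + edgeDegree F x := by
  rw [edgeDegree, filter_union, card_union_of_disjoint (disjoint_filter_filter h)]
  rfl

lemma edgeDegree_union_le (E F : Finset (Sym2 V)) (x : V) :
    edgeDegree (E ∪ F) x ≤ edgeDegree E x + edgeDegree F x := by
  rw [edgeDegree, filter_union]
  exact card_union_le _ _

lemma edgeDegree_biUnion_le (s : Finset ι) (E : ι → Finset (Sym2 V)) (x : V) :
    edgeDegree (s.biUnion E) x ≤ ∑ i ∈ s, edgeDegree (E i) x := by
  rw [edgeDegree, filter_biUnion]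
  exact card_biUnion_le

variable [Fintype V]

lemma card_le_sum_edgeDegree (E : Finset (Sym2 V)) : #E ≤ ∑ x, edgeDegree E x := by
  have hdouble : ∑ x, edgeDegree E x = ∑ e ∈ E, #{x | x ∈ e} :=
    sum_card_bipartiteAbove_eq_sum_card_bipartiteBelow (· ∈ ·)
  rw [hdouble, card_eq_sum_ones]
  refine sum_le_sum fun e _ ↦ card_pos.2 ⟨e.out.1, ?_⟩
  simpa using e.out_fst_mem

lemma sum_edgeDegree_biUnion_mul_le {s : Finset ι} {E : ι → Finset (Sym2 V)} {b : ℕ}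
    {F : Finset (Sym2 V)}
    (h : ∀ i ∈ s, ∑ x, edgeDegree (E i) x * edgeDegree (F \ E i) x ≤ b) :
    ∑ x, edgeDegree (s.biUnion E) x * edgeDegree (F \ s.biUnion E) x ≤ #s * b :=
  calc ∑ x, edgeDegree (s.biUnion E) x * edgeDegree (F \ s.biUnion E) x
    _ ≤ ∑ x, ∑ i ∈ s, edgeDegree (E i) x * edgeDegree (F \ E i) x := by
      refine sum_le_sum fun x _ ↦ ?_
      grw [edgeDegree_biUnion_le, sum_mul]
      gcongr with i hi
      exact subset_biUnion_of_mem E hi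
    _ = ∑ i ∈ s, ∑ x, edgeDegree (E i) x * edgeDegree (F \ E i) x := sum_comm
    _ ≤ #s * b := by simpa only [smul_eq_mul] using sum_le_card_nsmul s _ b h

theorem sum_sq_edgeDegree_biUnion_le {s : Finset ι} {E : ι → Finset (Sym2 V)} {b c : ℕ}
    (hdeg : ∀ i ∈ s, ∀ x, edgeDegree (E i) x ≤ c)
    (hbranch : ∀ i ∈ s, ∀ j ∈ s, ∑ x, edgeDegree (E i) x * edgeDegree (E j \ E i) x ≤ b) :
    ∑ x, edgeDegree (s.biUnion E) x ^ 2 ≤ c * ∑ x, edgeDegree (s.biUnion E) x + b * #s ^ 2 := by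
  classical
  induction s using Finset.induction_on with
  | empty => simp [edgeDegree]
  | insert j s hj ih =>
    simp only [forall_mem_insert] at hdeg hbranch
    have hih := ih hdeg.2 fun i hi ↦ (hbranch.2 i hi).2
    have hmixed := sum_edgeDegree_biUnion_mul_le fun i hi ↦ (hbranch.2 i hi).1
    rw [biUnion_insert, union_comm, ← union_sdiff_self_eq_union, card_insert_of_notMem hj]
    set U := s.biUnion E
    simp only [edgeDegree_union_of_disjoint disjoint_sdiff]
    have hnew : ∑ x, edgeDegree (E j \ U) x ^ 2 ≤ c * ∑ x, edgeDegree (E j \ U) x := by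
      rw [mul_sum]
      refine sum_le_sum fun x _ ↦ ?_
      rw [sq]
      gcongr
      exact (edgeDegree_mono sdiff_subset x).trans (hdeg.1 x)
    calc ∑ x, (edgeDegree U x + edgeDegree (E j \ U) x) ^ 2
      _ = ∑ x, edgeDegree U x ^ 2 + 2 * ∑ x, edgeDegree U x * edgeDegree (E j \ U) x
          + ∑ x, edgeDegree (E j \ U) x ^ 2 := by
        simp only [add_sq, sum_add_distrib, mul_sum, mul_assoc]
      _ ≤ (c * ∑ x, edgeDegree U x + b * #s ^ 2) + 2 * (#s * b)
          + c * ∑ x, edgeDegree (E j \ U) x := by gcongr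
      _ ≤ c * ∑ x, (edgeDegree U x + edgeDegree (E j \ U) x) + b * (#s + 1) ^ 2 := by
        rw [sum_add_distrib]
        linarith

end EdgeDegree

section PathDegree

variable {V : Type*} [DecidableEq V] {G : SimpleGraph V} {u v u' v' x : V}

lemma edgeDegree_edges_eq_zero {p : G.Walk u v} (hx : x ∉ p.support) :
    edgeDegree p.edges.toFinset x = 0 := by
  refine card_eq_zero.2 (filter_eq_empty_iff.2 fun e he hxe ↦ hx ?_)
  exact p.mem_support_of_mem_edges (List.mem_toFinset.1 he) hxe

lemma edgeDegree_edges_start_le_one {p : G.Walk u v} (hp : p.IsPath) :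
    edgeDegree p.edges.toFinset u ≤ 1 := by
  suffices hsub : ({e ∈ p.edges.toFinset | u ∈ e} : Finset (Sym2 V)) ⊆ {s(u, p.snd)} from
    card_le_card hsub
  intro e he
  obtain ⟨he, z, rfl⟩ := mem_filter.1 he
  rw [mem_singleton, hp.eq_snd_of_mem_edges (List.mem_toFinset.1 he)]

lemma edgeDegree_edges_end_le_one {p : G.Walk u v} (hp : p.IsPath) :
    edgeDegree p.edges.toFinset v ≤ 1 := by
  simpa using edgeDegree_edges_start_le_one hp.reverse

lemma edgeDegree_edges_le_two {p : G.Walk u v} (hp : p.IsPath) (x : V) :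
    edgeDegree p.edges.toFinset x ≤ 2 := by
  by_cases hx : x ∈ p.support
  · rw [← p.take_spec hx, Walk.edges_append, List.toFinset_append]
    exact (edgeDegree_union_le _ _ x).trans <| add_le_add
      (edgeDegree_edges_end_le_one (hp.takeUntil hx))
      (edgeDegree_edges_start_le_one (hp.dropUntil hx))
  · exact (edgeDegree_edges_eq_zero hx).trans_le zero_le_two

lemma sum_support_edgeDegree_edges_le_one {r : G.Walk u x} {w : G.Walk x v}
    (h : (r.append w).IsPath) :
    ∑ z ∈ w.support.toFinset, edgeDegree r.edges.toFinset z ≤ 1 := by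
  have hzero : ∀ z ∈ w.support.toFinset, z ≠ x → edgeDegree r.edges.toFinset z = 0 := by
    intro z hz hne
    refine edgeDegree_edges_eq_zero fun hzr ↦ ?_
    exact h.ne_of_mem_support_of_append hne hzr (List.mem_toFinset.1 hz) rfl
  rw [sum_eq_single_of_mem x (by simp) hzero]
  exact edgeDegree_edges_end_le_one h.of_append_left

lemma sum_support_edgeDegree_sdiff_le_two_of_isSubwalk {q : G.Walk u v} {w : G.Walk u' v'}
    (hq : q.IsPath) (hw : w.IsSubwalk q) :
    ∑ z ∈ w.support.toFinset, edgeDegree (q.edges.toFinset \ w.edges.toFinset) z ≤ 2 := by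
  obtain ⟨a, b, rfl⟩ := hw
  have hbefore := sum_support_edgeDegree_edges_le_one hq.of_append_left
  have hafter : ∑ z ∈ w.support.toFinset, edgeDegree b.edges.toFinset z ≤ 1 := by
    rw [← Walk.append_assoc] at hq
    have hrev := hq.of_append_right.reverse
    rw [Walk.reverse_append] at hrev
    simpa using sum_support_edgeDegree_edges_le_one hrev
  have hsub : ((a.append w).append b).edges.toFinset \ w.edges.toFinset ⊆
      a.edges.toFinset ∪ b.edges.toFinset := by
    intro e
    simp only [Walk.edges_append, mem_sdiff, List.mem_toFinset, List.mem_append, mem_union]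
    tauto
  calc _ ≤ ∑ z ∈ w.support.toFinset,
        (edgeDegree a.edges.toFinset z + edgeDegree b.edges.toFinset z) :=
        sum_le_sum fun z _ ↦ (edgeDegree_mono hsub z).trans (edgeDegree_union_le _ _ z)
    _ ≤ 1 + 1 := by
      rw [sum_add_distrib]
      exact add_le_add hbefore hafter

end PathDegree

section ConsistentFamilies

lemma le_add_of_sq_le_mul_add_sq {a b d : ℝ} (ha : 0 ≤ a) (hb : 0 ≤ b)
    (h : d ^ 2 ≤ a * d + b ^ 2) : d ≤ a + b := by
  by_contra! hlt
  nlinarith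

variable {V : Type} [DecidableEq V] {G : SimpleGraph V} {u v u' v' : V}

lemma ConsistentPair.sum_support_edgeDegree_sdiff_le_two {p : G.Walk u v} {q : G.Walk u' v'}
    (h : ConsistentPair p q) (hq : q.IsPath) :
    ∑ z ∈ p.support.toFinset, edgeDegree (q.edges.toFinset \ p.edges.toFinset) z ≤ 2 := by
  have hzero {z : V} (hz : z ∉ q.support) :
      edgeDegree (q.edges.toFinset \ p.edges.toFinset) z = 0 :=
    Nat.eq_zero_of_le_zero <|
      (edgeDegree_mono sdiff_subset z).trans_eq (edgeDegree_edges_eq_zero hz)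
  rcases h with hdisj | ⟨x, y, w, hwp, hwq, hinter⟩
  · rw [sum_eq_zero fun z hz ↦ hzero (hdisj z (List.mem_toFinset.1 hz))]
    exact zero_le_two
  rw [isSubwalk_iff] at hwp
  rw [isSubwalk_iff, isSubwalk_iff] at hwq
  have hw : ∑ z ∈ w.support.toFinset, edgeDegree (q.edges.toFinset \ w.edges.toFinset) z ≤ 2 := by
    rcases hwq with hwq | hwq
    · exact sum_support_edgeDegree_sdiff_le_two_of_isSubwalk hq hwq
    · simpa using sum_support_edgeDegree_sdiff_le_two_of_isSubwalk hq hwq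
  have hedges : w.edges.toFinset ⊆ p.edges.toFinset :=
    Multiset.toFinset_subset.2 hwp.edges_subset
  have hsupp : w.support.toFinset ⊆ p.support.toFinset :=
    Multiset.toFinset_subset.2 hwp.support_subset
  calc ∑ z ∈ p.support.toFinset, edgeDegree (q.edges.toFinset \ p.edges.toFinset) z
    _ = ∑ z ∈ w.support.toFinset, edgeDegree (q.edges.toFinset \ p.edges.toFinset) z := by
      refine (sum_subset hsupp fun z hzp hzw ↦ hzero fun hzq ↦ hzw ?_).symm
      exact List.mem_toFinset.2 ((hinter z).1 ⟨List.mem_toFinset.1 hzp, hzq⟩)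
    _ ≤ ∑ z ∈ w.support.toFinset, edgeDegree (q.edges.toFinset \ w.edges.toFinset) z := by gcongr
    _ ≤ 2 := hw

variable [Fintype V]

lemma ConsistentPair.sum_edgeDegree_mul_sdiff_le_four {p : G.Walk u v} {q : G.Walk u' v'}
    (h : ConsistentPair p q) (hp : p.IsPath) (hq : q.IsPath) :
    ∑ x, edgeDegree p.edges.toFinset x * edgeDegree (q.edges.toFinset \ p.edges.toFinset) x ≤ 4 :=
  calc
    _ = ∑ x ∈ p.support.toFinset,
        edgeDegree p.edges.toFinset x * edgeDegree (q.edges.toFinset \ p.edges.toFinset) x := by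
      refine (sum_subset (subset_univ _) fun x _ hx ↦ ?_).symm
      rw [edgeDegree_edges_eq_zero (mt List.mem_toFinset.2 hx), zero_mul]
    _ ≤ ∑ x ∈ p.support.toFinset,
        2 * edgeDegree (q.edges.toFinset \ p.edges.toFinset) x := by
      gcongr with x
      exact edgeDegree_edges_le_two hp x
    _ ≤ 2 * 2 := by
      rw [← mul_sum]
      gcongr
      exact h.sum_support_edgeDegree_sdiff_le_two hq

theorem card_biUnion_edges_le_of_consistentPair {ι : Type*} {s : Finset ι} {a b : ι → V}
    (p : ∀ i, G.Walk (a i) (b i)) (hp : ∀ i ∈ s, (p i).IsPath)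
    (hcon : ∀ i ∈ s, ∀ j ∈ s, ConsistentPair (p i) (p j)) :
    (#(s.biUnion fun i ↦ (p i).edges.toFinset) : ℝ) ≤
      2 * (Fintype.card V + √(Fintype.card V) * #s) := by
  set E := s.biUnion fun i ↦ (p i).edges.toFinset
  set D := ∑ x, edgeDegree E x
  have hsq : ∑ x, edgeDegree E x ^ 2 ≤ 2 * D + 4 * #s ^ 2 :=
    sum_sq_edgeDegree_biUnion_le (fun i hi ↦ edgeDegree_edges_le_two (hp i hi)) fun i hi j hj ↦
      (hcon i hi j hj).sum_edgeDegree_mul_sdiff_le_four (hp i hi) (hp j hj)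
  have hD : D ^ 2 ≤ Fintype.card V * (2 * D + 4 * #s ^ 2) :=
    sq_sum_le_card_mul_sum_sq.trans (Nat.mul_le_mul_left _ hsq)
  have hDreal : (D : ℝ) ^ 2 ≤
      2 * Fintype.card V * D + (2 * (√(Fintype.card V) * #s)) ^ 2 := by
    rw [mul_pow, mul_pow, Real.sq_sqrt (Nat.cast_nonneg _)]
    have : (D : ℝ) ^ 2 ≤ Fintype.card V * (2 * D + 4 * #s ^ 2) := mod_cast hD
    linarith
  calc (#E : ℝ)
    _ ≤ D := mod_cast card_le_sum_edgeDegree E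
    _ ≤ 2 * Fintype.card V + 2 * (√(Fintype.card V) * #s) :=
      le_add_of_sq_le_mul_add_sq (by positivity) (by positivity) hDreal
    _ = 2 * (Fintype.card V + √(Fintype.card V) * #s) := by ring

end ConsistentFamilies

/-- **Consistent shortest paths for a subset.** There is an absolute constant
`C` such that: for every connected finite simple graph `G` on `n` vertices and
every subset `S` of its vertices, there is a consistent family of shortest
paths `π_{s,t}` for `s, t ∈ S` whose total number of distinct edges is at most
`C · (n + √n · |S|²)`. -/
theorem consistent_shortest_paths :
    ∃ C : ℝ, 0 < C ∧
      ∀ (V : Type) [Fintype V] (G : SimpleGraph V), G.Connected →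
        ∀ S : Finset V,
          ∃ π : (s t : V) → G.Walk s t,
            (∀ s ∈ S, ∀ t ∈ S, (π s t).IsPath ∧ (π s t).length = G.dist s t) ∧
            (∀ s ∈ S, ∀ t ∈ S, ∀ s' ∈ S, ∀ t' ∈ S,
              ConsistentPair (π s t) (π s' t')) ∧
            (({e : Sym2 V | ∃ s ∈ S, ∃ t ∈ S, e ∈ (π s t).edges}).ncard : ℝ) ≤
              C * ((Fintype.card V : ℝ) +
                Real.sqrt (Fintype.card V) * (S.card : ℝ) ^ 2) := by
  refine ⟨2, two_pos, fun V _ G hG S ↦ ?_⟩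
  classical
  obtain ⟨f, hf⟩ := exists_injective_sum_nat (Sym2 V)
  choose π hπ using fun s t ↦ exists_isLightestGeodesic f (hG.preconnected s t)
  refine ⟨π, fun s _ t _ ↦ ⟨(hπ s t).isPath, (hπ s t).length_eq⟩,
    fun s _ t _ s' _ t' _ ↦ (hπ s t).consistentPair hf (hπ s' t'), ?_⟩
  have hcard := card_biUnion_edges_le_of_consistentPair (s := S ×ˢ S) (fun i ↦ π i.1 i.2)
    (fun i _ ↦ (hπ i.1 i.2).isPath) fun i _ j _ ↦ (hπ i.1 i.2).consistentPair hf (hπ j.1 j.2)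
  have hedges : {e : Sym2 V | ∃ s ∈ S, ∃ t ∈ S, e ∈ (π s t).edges} =
      (S ×ˢ S).biUnion fun i ↦ (π i.1 i.2).edges.toFinset := by
    ext e
    simp
  rw [card_product] at hcard
  rw [hedges, Set.ncard_coe_finset, sq]
  exact_mod_cast hcard
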